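/- Let S be a graded reduced affine monoid. If the defining congruence ∼_S has a quadratic Gröbner system with respect to some admissible total order on M, then the defining congruence ∼_{S̃} of S̃ also has a quadratic Gröbner system with respect to some admissible total order on M̃. -/

import Mathlib

/-!
The order on the free commutative monoid over the atoms `a[i]` compares first the images under `κ`
with the given order, and breaks ties by the first position, in the lexicographic order on the
pairs (atom, level), at which the exponents differ; there the larger exponent is the smaller
element. The Gröbner system consists of *all* decreasing pairs of congruent elements of length at
most two, a finite set since `S` has finitely many atoms.

Let `z` be divisible by no first component of such a pair, and suppose that `y ∼ z` is smaller.

* `κ z` is divisible by no leading term of the given system: a factor of `κ z` lifts to a factor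
  of `z` (`exists_split`), and the tail of a relation lifts with any prescribed value of `δ` up to
  its weight (`exists_lift`), so a relation of `S` applicable to `κ z` lifts to one
  applicable to `z`. Hence `κ z` is minimal in its class, and therefore `κ y = κ z`.
* If `κ y = κ z`, `δ y = δ z` and `y` precedes `z`, then `z` contains `a[i] b[j]` with `0 < i`,
  `j < |b|` and `a[i]` not after `b[j]` (`exists_spread`). Replacing it by `a[i-1] b[j+1]` gives a
  quadratic decreasing relation (`spread_lt`), which is a contradiction.
-/

/-! ## Common definitions: atoms, factorizations, catenary degrees -/

/-- An atom of an additive commutative monoid: a nonzero element that cannot be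
written as a sum of two nonzero elements. -/
def IsAtm {S : Type*} [AddCommMonoid S] (a : S) : Prop :=
  a ≠ 0 ∧ ∀ b c : S, a = b + c → b = 0 ∨ c = 0

/-- The set of atoms of an additive commutative monoid. -/
def Atoms (S : Type*) [AddCommMonoid S] : Set S := {a | IsAtm a}

/-- Exponent vectors: the free commutative monoid on the set of atoms (written additively). -/
abbrev FreeExp (S : Type*) [AddCommMonoid S] := ↥(Atoms S) →₀ ℕ

/-- The factorization homomorphism, sending an exponent vector `α` to `a^α ∈ S`. -/
def fac {S : Type*} [AddCommMonoid S] (α : FreeExp S) : S :=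
  α.sum fun a n => n • (a : S)

lemma fac_add {S : Type*} [AddCommMonoid S] (α β : FreeExp S) :
    fac (α + β) = fac α + fac β :=
  Finsupp.sum_add_index' (fun _ => zero_nsmul _) (fun a m n => add_nsmul (a : S) m n)

/-- Total degree (length) `|α|` of an exponent vector. -/
def degE {σ : Type*} (α : σ →₀ ℕ) : ℕ := α.sum fun _ n => n

/-- Pointwise minimum (the gcd in the free commutative monoid). -/
noncomputable def gcdE {σ : Type*} (α β : σ →₀ ℕ) : σ →₀ ℕ :=
  Finsupp.zipWith min (min_self 0) α β

/-- The distance `d(α,γ)` between two exponent vectors. -/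
noncomputable def dDist {σ : Type*} (α β : σ →₀ ℕ) : ℕ :=
  max (degE (α - gcdE α β)) (degE (β - gcdE α β))

/-- `α` and `γ` can be connected by a `d`-chain. -/
def ChainConn {S : Type*} [AddCommMonoid S] (d : ℕ) (α γ : FreeExp S) : Prop :=
  ∃ (k : ℕ) (c : ℕ → FreeExp S), c 0 = α ∧ c k = γ ∧
    ∀ j < k, fac (c j) = fac (c (j + 1)) ∧ dDist (c j) (c (j + 1)) ≤ d

/-- The catenary degree of `S`. -/
noncomputable def catDeg (S : Type*) [AddCommMonoid S] : ℕ :=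
  sInf {d | ∀ α γ : FreeExp S, fac α = fac γ → ChainConn d α γ}

/-- Graded degree `|α|_gr` of an exponent vector, w.r.t. a weight (grading) `w` on `S`. -/
def gdegE {S : Type*} [AddCommMonoid S] (w : S → ℕ) (α : FreeExp S) : ℕ :=
  α.sum fun a n => n * w (a : S)

/-- The graded distance `d_gr(α,γ)`. -/
noncomputable def dDistGr {S : Type*} [AddCommMonoid S] (w : S → ℕ) (α β : FreeExp S) : ℕ :=
  max (gdegE w (α - gcdE α β)) (gdegE w (β - gcdE α β))

/-- `α` and `γ` can be connected by a chain of weight at most `d`. -/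
def ChainConnGr {S : Type*} [AddCommMonoid S] (w : S → ℕ) (d : ℕ) (α γ : FreeExp S) : Prop :=
  ∃ (k : ℕ) (c : ℕ → FreeExp S), c 0 = α ∧ c k = γ ∧
    ∀ j < k, fac (c j) = fac (c (j + 1)) ∧ dDistGr w (c j) (c (j + 1)) ≤ d

/-- The graded catenary degree of `S` w.r.t. the grading `w`. -/
noncomputable def catDegGr (S : Type*) [AddCommMonoid S] (w : S → ℕ) : ℕ :=
  sInf {d | ∀ α γ : FreeExp S, fac α = fac γ → ChainConnGr w d α γ}

/-- The defining congruence `∼_S` of `S` on the free commutative monoid on the atoms. -/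
def defCon (S : Type*) [AddCommMonoid S] : AddCon (FreeExp S) where
  r α β := fac α = fac β
  iseqv := ⟨fun _ => rfl, Eq.symm, Eq.trans⟩
  add' := fun {a b c d} h1 h2 => by
    have h1' : fac a = fac b := h1
    have h2' : fac c = fac d := h2
    show fac (a + c) = fac (b + d)
    rw [fac_add, fac_add, h1', h2']

/-- A reduced affine monoid: commutative, cancellative, a finitely generated monoid embedding
into a finitely generated free abelian group, whose only unit is the identity. -/
class IsReducedAffine (S : Type*) [AddCommMonoid S] : Prop where
  cancel : ∀ a b c : S, a + b = a + c → b = c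
  affine : ∃ (k : ℕ) (f : S →+ (Fin k → ℤ)), Function.Injective f
  fg : AddMonoid.FG S
  reduced : ∀ s : S, IsAddUnit s → s = 0

/-! ## The tilde construction -/

/-- The atoms of `S̃`: pairs `a[i]` with `a` an atom of `S` and `0 ≤ i ≤ |a|`. -/
def ATil (S : Type*) [AddCommMonoid S] (w : S → ℕ) : Type _ :=
  {p : ↥(Atoms S) × ℕ // p.2 ≤ w (p.1 : S)}

/-- Constructor `a[i]` for atoms of `S̃`. -/
def atil {S : Type*} [AddCommMonoid S] (w : S → ℕ) (a : ↥(Atoms S)) (i : ℕ)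
    (h : i ≤ w (a : S)) : ATil S w := ⟨(a, i), h⟩

/-- The map `κ : ℕ₀^{𝒜(S̃)} → ℕ₀^{𝒜(S)}`, `κ(λ)(a) = Σ_i λ(a[i])`. -/
noncomputable def kap (S : Type*) [AddCommMonoid S] (w : S → ℕ) :
    (ATil S w →₀ ℕ) → FreeExp S :=
  Finsupp.mapDomain fun p => p.val.1

/-- The map `δ : ℕ₀^{𝒜(S̃)} → ℕ₀`, `δ(λ) = Σ i·λ(a[i])`. -/
def delt {S : Type*} [AddCommMonoid S] (w : S → ℕ) (l : ATil S w →₀ ℕ) : ℕ :=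
  l.sum fun p n => n * p.val.2

lemma kap_add {S : Type*} [AddCommMonoid S] (w : S → ℕ) (l m : ATil S w →₀ ℕ) :
    kap S w (l + m) = kap S w l + kap S w m := Finsupp.mapDomain_add

lemma delt_add {S : Type*} [AddCommMonoid S] (w : S → ℕ) (l m : ATil S w →₀ ℕ) :
    delt w (l + m) = delt w l + delt w m :=
  Finsupp.sum_add_index' (fun _ => zero_mul _) (fun _ m n => add_mul m n _)

/-- The defining congruence of `S̃` (under the identification `𝒜(S̃) = {a[i]}`,
`x^λ ∼_{S̃} x^μ` iff `a^{κλ} = a^{κμ}` in `S` and `δλ = δμ`). -/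
def defConTil (S : Type*) [AddCommMonoid S] (w : S → ℕ) : AddCon (ATil S w →₀ ℕ) where
  r l m := fac (kap S w l) = fac (kap S w m) ∧ delt w l = delt w m
  iseqv := ⟨fun _ => ⟨rfl, rfl⟩, fun h => ⟨h.1.symm, h.2.symm⟩,
    fun h h' => ⟨h.1.trans h'.1, h.2.trans h'.2⟩⟩
  add' := fun h1 h2 =>
    ⟨by rw [kap_add, kap_add, fac_add, fac_add, h1.1, h2.1],
     by rw [delt_add, delt_add, h1.2, h2.2]⟩

/-- The quadratic relations `(x_{a[k]} x_{b[l]}, x_{a[k+1]} x_{b[l-1]})`,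
for `a, b ∈ 𝒜(S)`, `0 ≤ k ≤ |a| - 1`, `1 ≤ l ≤ |b|`. -/
def quadRel (S : Type*) [AddCommMonoid S] (w : S → ℕ) :
    (ATil S w →₀ ℕ) → (ATil S w →₀ ℕ) → Prop := fun x y =>
  ∃ (a b : ↥(Atoms S)) (k l : ℕ) (hk : k + 1 ≤ w (a : S)) (_ : 1 ≤ l) (hl : l ≤ w (b : S)),
    x = Finsupp.single (atil w a k (Nat.le_of_succ_le hk)) 1 +
        Finsupp.single (atil w b l hl) 1 ∧
    y = Finsupp.single (atil w a (k + 1) hk) 1 +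
        Finsupp.single (atil w b (l - 1) (le_trans (Nat.sub_le l 1) hl)) 1

/-! ## Block monoids -/

/-- The block monoid `ℬ(g)` of a tuple `g = (g₁,…,g_m)` of elements of a commutative
monoid `G`. -/
def BlockT {G : Type*} [CommMonoid G] {m : ℕ} (g : Fin m → G) :
    AddSubmonoid (Fin m → ℕ) where
  carrier := {α | ∏ i, g i ^ α i = 1}
  zero_mem' := by simp
  add_mem' := by
    intro a b ha hb
    simp only [Set.mem_setOf_eq] at *
    show ∏ i, g i ^ (a i + b i) = 1
    simp [pow_add, Finset.prod_mul_distrib, ha, hb]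

/-- The block monoid `ℬ(G₀)` of a subset `G₀` of a commutative monoid `G`. -/
noncomputable def BlockS {G : Type*} [CommMonoid G] (G₀ : Set G) : AddSubmonoid (G₀ →₀ ℕ) where
  carrier := {α | (α.prod fun x n => (x : G) ^ n) = 1}
  zero_mem' := by simp
  add_mem' := by
    intro a b ha hb
    simp only [Set.mem_setOf_eq] at *
    rw [Finsupp.prod_add_index' (fun x => pow_zero _) (fun x m n => pow_add _ m n), ha, hb,
      one_mul]

/-- The monoid `S̃` for `S = ℬ(g)` graded by the last coordinate. -/
def TildeB {G : Type*} [CommMonoid G] {m : ℕ} (g : Fin (m + 1) → G) :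
    AddSubmonoid ((Fin (m + 1) → ℕ) × ℕ) where
  carrier := {p | p.1 ∈ BlockT g ∧ p.2 ≤ p.1 (Fin.last m)}
  zero_mem' := ⟨(BlockT g).zero_mem, le_rfl⟩
  add_mem' := by
    intro a b ha hb
    exact ⟨(BlockT g).add_mem ha.1 hb.1, add_le_add ha.2 hb.2⟩

/-- The Davenport constant `D(G₀)`: the maximal length of an atom of `ℬ(G₀)`. -/
noncomputable def DavenportC {G : Type*} [CommMonoid G] (G₀ : Set G) : ℕ :=
  sSup {k | ∃ γ : ↥(BlockS G₀), IsAtm γ ∧ degE (γ : G₀ →₀ ℕ) = k}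

/-- The little Davenport constant `d(G₀)`: the maximal length of a sequence over `G₀`
containing no product-one subsequence. -/
noncomputable def littleDav {G : Type*} [CommMonoid G] (G₀ : Set G) : ℕ :=
  sSup {k | ∃ α : G₀ →₀ ℕ, degE α = k ∧
    ∀ γ : ↥(BlockS G₀), IsAtm γ → ∃ x : G₀, α x < (γ : G₀ →₀ ℕ) x}

/-! ## Gröbner systems -/

/-- An admissible total order (given as a strict order relation) on a free commutative
monoid, written additively. -/
def IsAdmissible {F : Type*} [AddCommMonoid F] (lt : F → F → Prop) : Prop :=
  (∀ x y, lt x y ∨ x = y ∨ lt y x) ∧ (∀ x y z, lt x y → lt y z → lt x z) ∧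
  (∀ x, ¬ lt x x) ∧ (∀ x y z, lt x y → lt (x + z) (y + z)) ∧ (∀ x, x ≠ 0 → lt 0 x)

/-- `Λ` is a Gröbner system of the congruence `c` with respect to the order `lt`. -/
def IsGroebnerSystem {F : Type*} [AddCommMonoid F] (lt : F → F → Prop) (c : AddCon F)
    (Λ : Set (F × F)) : Prop :=
  Λ.Finite ∧ (∀ p ∈ Λ, c p.1 p.2 ∧ lt p.2 p.1) ∧
  (∀ z : F, (∀ p ∈ Λ, ¬ ∃ u, z = p.1 + u) → ∀ y, c z y → z = y ∨ lt z y)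

/-- The ordering on positions `a[i]` induced by an enumeration of the atoms. -/
def posLt {S : Type*} [AddCommMonoid S] {w : S → ℕ} {n : ℕ} (e : Fin n ≃ ↥(Atoms S))
    (q p : ATil S w) : Prop :=
  e.symm q.val.1 < e.symm p.val.1 ∨ (e.symm q.val.1 = e.symm p.val.1 ∧ q.val.2 < p.val.2)

/-- The admissible order on the free commutative monoid on `𝒜(S̃)` extending the order
`lt` on the free commutative monoid on `𝒜(S)`. -/
def ltTil {S : Type*} [AddCommMonoid S] (w : S → ℕ) (lt : FreeExp S → FreeExp S → Prop)
    {n : ℕ} (e : Fin n ≃ ↥(Atoms S)) (mu lam : ATil S w →₀ ℕ) : Prop :=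
  lt (kap S w mu) (kap S w lam) ∨
  (kap S w mu = kap S w lam ∧
    ∃ p : ATil S w, lam p < mu p ∧ ∀ q : ATil S w, posLt e q p → mu q = lam q)

/-- The set `Γ₂` of pairs `(x_{a[i]} x_{b[j]}, x_{a[i-1]} x_{b[j+1]})` with `x_a ≺ x_b`,
`0 < i ≤ |a|`, `0 ≤ j < |b|`. -/
def Gam2 (S : Type*) [AddCommMonoid S] (w : S → ℕ) (lt : FreeExp S → FreeExp S → Prop) :
    Set ((ATil S w →₀ ℕ) × (ATil S w →₀ ℕ)) :=
  {pr | ∃ (a b : ↥(Atoms S)) (i j : ℕ) (_ : 0 < i) (hi : i ≤ w (a : S)) (hj : j + 1 ≤ w (b : S)),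
    lt (Finsupp.single a 1) (Finsupp.single b 1) ∧
    pr = (Finsupp.single (atil w a i hi) 1 +
            Finsupp.single (atil w b j (Nat.le_of_succ_le hj)) 1,
          Finsupp.single (atil w a (i - 1) (le_trans (Nat.sub_le i 1) hi)) 1 +
            Finsupp.single (atil w b (j + 1) hj) 1)}

/-- The set `Γ₃` of pairs `(x_{a[i]} x_{a[j]}, x_{a[i-1]} x_{a[j+1]})` with `0 < i ≤ j < |a|`. -/
def Gam3 (S : Type*) [AddCommMonoid S] (w : S → ℕ) :
    Set ((ATil S w →₀ ℕ) × (ATil S w →₀ ℕ)) :=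
  {pr | ∃ (a : ↥(Atoms S)) (i j : ℕ) (_ : 0 < i) (hij : i ≤ j) (hj : j + 1 ≤ w (a : S)),
    pr = (Finsupp.single (atil w a i (le_trans hij (Nat.le_of_succ_le hj))) 1 +
            Finsupp.single (atil w a j (Nat.le_of_succ_le hj)) 1,
          Finsupp.single (atil w a (i - 1)
              (le_trans (Nat.sub_le i 1) (le_trans hij (Nat.le_of_succ_le hj)))) 1 +
            Finsupp.single (atil w a (j + 1) hj) 1)}

/-! ## The presentation homomorphism for semigroup rings -/

/-- The homomorphism `π_R : R[x_a : a ∈ 𝒜(S)] → R[S]`, `x_a ↦ a`. -/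
noncomputable def piR (R : Type*) (S : Type*) [CommRing R] [AddCommMonoid S] :
    MvPolynomial ↥(Atoms S) R →ₐ[R] AddMonoidAlgebra R S :=
  MvPolynomial.aeval fun a => AddMonoidAlgebra.single (a : S) 1

/-! ### Free commutative monoids -/

section Free

variable {σ : Type*}

lemma finsupp_ind {P : (σ →₀ ℕ) → Prop} (h0 : P 0) (h1 : ∀ a, P (Finsupp.single a 1))
    (ha : ∀ x y, P x → P y → P (x + y)) (x : σ →₀ ℕ) : P x := by
  induction x using Finsupp.induction_linear with
  | zero => exact h0
  | add x y hx hy => exact ha x y hx hy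
  | single a n =>
    induction n with
    | zero => simpa using h0
    | succ n ih => rw [Finsupp.single_add]; exact ha _ _ ih (h1 a)

lemma exists_eq_single_add {x : σ →₀ ℕ} {p : σ} (h : x p ≠ 0) :
    ∃ y, x = Finsupp.single p 1 + y := by
  classical
  refine ⟨x - Finsupp.single p 1, ?_⟩
  ext q
  by_cases hq : p = q
  · subst hq; simp; omega
  · simp [hq]

lemma degE_add (x y : σ →₀ ℕ) : degE (x + y) = degE x + degE y :=
  Finsupp.sum_add_index' (fun _ => rfl) (fun _ _ _ => rfl)

lemma degE_zero : degE (0 : σ →₀ ℕ) = 0 := Finsupp.sum_zero_index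

lemma degE_single (a : σ) (n : ℕ) : degE (Finsupp.single a n) = n :=
  Finsupp.sum_single_index rfl

lemma le_degE (x : σ →₀ ℕ) (p : σ) : x p ≤ degE x := by
  classical
  by_cases h : p ∈ x.support
  · exact Finset.single_le_sum (f := fun q => x q) (fun _ _ => Nat.zero_le _) h
  · simp [Finsupp.notMem_support_iff.1 h]

lemma finite_degE_le [Finite σ] (N : ℕ) : {x : σ →₀ ℕ | degE x ≤ N}.Finite := by
  have hf : (Set.pi Set.univ fun _ : σ => Set.Iic N).Finite :=
    Set.Finite.pi fun _ => Set.finite_Iic N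
  refine Set.Finite.subset (hf.preimage (f := fun x : σ →₀ ℕ => (x : σ → ℕ))
    DFunLike.coe_injective.injOn) ?_
  intro x hx p _
  exact (le_degE x p).trans hx

end Free

/-! ### Finiteness of the set of atoms -/

section Tilde

variable {S : Type*} [AddCommMonoid S] {w : S → ℕ}

lemma finite_atoms (h : AddMonoid.FG S) : (Atoms S).Finite := by
  obtain ⟨T, hT⟩ := AddMonoid.fg_def.1 h
  refine T.finite_toSet.subset fun a ha => ?_
  have key : ∀ s ∈ AddSubmonoid.closure (T : Set S), IsAtm s → s ∈ (T : Set S) := by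
    intro s hs
    induction hs using AddSubmonoid.closure_induction with
    | mem x hx => exact fun _ => hx
    | zero => exact fun h => absurd rfl h.1
    | add x y _ _ hx hy =>
      intro h
      rcases h.2 x y rfl with h0 | h0
      · subst h0; rw [zero_add] at h ⊢; exact hy h
      · subst h0; rw [add_zero] at h ⊢; exact hx h
  exact key a (hT ▸ AddSubmonoid.mem_top a) ha

lemma finite_atil [Finite ↥(Atoms S)] : Finite (ATil S w) := by
  have : Finite (Σ a : ↥(Atoms S), Fin (w (a : S) + 1)) := inferInstance
  refine Finite.of_injective
    (fun p : ATil S w => (⟨p.val.1, ⟨p.val.2, Nat.lt_succ_of_le p.2⟩⟩ :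
      Σ a : ↥(Atoms S), Fin (w (a : S) + 1))) ?_
  rintro ⟨⟨a, i⟩, hi⟩ ⟨⟨b, j⟩, hj⟩ h
  simp only [Sigma.mk.injEq] at h
  obtain ⟨rfl, h⟩ := h
  simp only [heq_eq_eq, Fin.mk.injEq] at h
  subst h
  rfl

/-! ### The maps `κ` and `δ`, and lifting along `κ` -/

lemma kap_zero : kap S w 0 = 0 := Finsupp.mapDomain_zero

lemma kap_single (p : ATil S w) (n : ℕ) :
    kap S w (Finsupp.single p n) = Finsupp.single p.val.1 n := Finsupp.mapDomain_single

lemma delt_single (p : ATil S w) (n : ℕ) :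
    delt w (Finsupp.single p n) = n * p.val.2 := Finsupp.sum_single_index (zero_mul _)

lemma delt_zero : delt w (0 : ATil S w →₀ ℕ) = 0 := Finsupp.sum_zero_index

lemma fac_zero : fac (0 : FreeExp S) = 0 := Finsupp.sum_zero_index

lemma fac_single (a : ↥(Atoms S)) : fac (Finsupp.single a 1) = (a : S) := by
  exact (Finsupp.sum_single_index (zero_nsmul (a : S))).trans (one_nsmul _)

lemma degE_kap (x : ATil S w →₀ ℕ) : degE (kap S w x) = degE x := by
  induction x using finsupp_ind with
  | h0 => rw [kap_zero, degE_zero, degE_zero]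
  | h1 p => rw [kap_single, degE_single, degE_single]
  | ha x y hx hy => rw [kap_add, degE_add, degE_add, hx, hy]

lemma kap_ne_zero {x : ATil S w →₀ ℕ} (hx : x ≠ 0) : kap S w x ≠ 0 := by
  intro h
  apply hx
  ext p
  have := le_degE x p
  rw [← degE_kap, h, degE_zero] at this
  simpa using this

lemma exists_of_kap_ne_zero {z : ATil S w →₀ ℕ} {a : ↥(Atoms S)} (h : kap S w z a ≠ 0) :
    ∃ p : ATil S w, p.val.1 = a ∧ z p ≠ 0 := by
  classical
  have h1 := Finsupp.mapDomain_support (Finsupp.mem_support_iff.2 h)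
  obtain ⟨p, hp, rfl⟩ := Finset.mem_image.1 h1
  exact ⟨p, rfl, Finsupp.mem_support_iff.1 hp⟩

/-- Factors of `κ z` lift to factors of `z`. -/
lemma exists_split (α : FreeExp S) : ∀ (z : ATil S w →₀ ℕ) (β : FreeExp S),
    kap S w z = α + β → ∃ z₁ z₂, z = z₁ + z₂ ∧ kap S w z₁ = α ∧ kap S w z₂ = β := by
  induction α using finsupp_ind with
  | h0 => exact fun z β h => ⟨0, z, (zero_add z).symm, kap_zero, by rw [h, zero_add]⟩
  | h1 a =>
    intro z β h
    obtain ⟨p, rfl, hp⟩ := exists_of_kap_ne_zero (z := z) (a := a) (by rw [h]; simp)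
    obtain ⟨y, rfl⟩ := exists_eq_single_add hp
    rw [kap_add, kap_single] at h
    exact ⟨_, y, rfl, kap_single _ _, add_left_cancel h⟩
  | ha x y hx hy =>
    intro z β h
    rw [add_assoc] at h
    obtain ⟨z₁, z', rfl, h1, h'⟩ := hx z _ h
    obtain ⟨z₂, z₃, rfl, h2, h3⟩ := hy z' _ h'
    exact ⟨z₁ + z₂, z₃, (add_assoc _ _ _).symm, by rw [kap_add, h1, h2], h3⟩

section Weight

variable (hw : ∀ s t : S, w (s + t) = w s + w t)
include hw

lemma weight_zero : w 0 = 0 := by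
  have := hw 0 0
  rw [add_zero] at this
  omega

/-- Every value of `δ` between `0` and the weight of `α` is attained on a lift of `α`. -/
lemma exists_lift (α : FreeExp S) : ∀ d ≤ w (fac α),
    ∃ y : ATil S w →₀ ℕ, kap S w y = α ∧ delt w y = d := by
  induction α using finsupp_ind with
  | h0 =>
    intro d hd
    rw [fac_zero, weight_zero hw] at hd
    exact ⟨0, kap_zero, by rw [delt_zero]; omega⟩
  | h1 a =>
    intro d hd
    rw [fac_single] at hd
    exact ⟨Finsupp.single (atil w a d hd) 1, kap_single _ _, by
      rw [delt_single, one_mul]; rfl⟩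
  | ha x y hx hy =>
    intro d hd
    rw [fac_add, hw] at hd
    obtain ⟨u, hu, hu'⟩ := hx (min d (w (fac x))) (min_le_right _ _)
    obtain ⟨v, hv, hv'⟩ := hy (d - min d (w (fac x))) (by omega)
    exact ⟨u + v, by rw [kap_add, hu, hv], by rw [delt_add, hu', hv']; omega⟩

lemma delt_le (x : ATil S w →₀ ℕ) : delt w x ≤ w (fac (kap S w x)) := by
  induction x using finsupp_ind with
  | h0 => rw [delt_zero]; exact Nat.zero_le _
  | h1 p => rw [delt_single, kap_single, fac_single, one_mul]; exact p.2
  | ha x y hx hy => rw [delt_add, kap_add, fac_add, hw]; exact add_le_add hx hy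

/-- If `δ x` is less than the weight of `x`, some factor of `x` is not at its top level. -/
lemma exists_not_full (x : ATil S w →₀ ℕ) : delt w x < w (fac (kap S w x)) →
    ∃ q : ATil S w, x q ≠ 0 ∧ q.val.2 < w (q.val.1 : S) := by
  induction x using finsupp_ind with
  | h0 => rw [kap_zero, fac_zero, weight_zero hw]; exact fun h => absurd h (Nat.not_lt_zero _)
  | h1 p =>
    rw [delt_single, kap_single, fac_single, one_mul]
    exact fun h => ⟨p, by simp, h⟩
  | ha x y hx hy =>
    rw [delt_add, kap_add, fac_add, hw]
    intro h
    rcases Nat.lt_or_ge (delt w x) (w (fac (kap S w x))) with h1 | h1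
    · obtain ⟨q, hq, hq'⟩ := hx h1
      exact ⟨q, by simp [hq], hq'⟩
    · obtain ⟨q, hq, hq'⟩ := hy (by omega)
      exact ⟨q, by simp [hq], hq'⟩

end Weight

/-! ### The order on the free commutative monoid over the atoms `a[i]` -/

variable {n : ℕ} (e : Fin n ≃ ↥(Atoms S))

/-- The position `a[i]` as an element of a lexicographically ordered product, so that `posLt` is
the pullback of a linear order. -/
def posKey (p : ATil S w) : Fin n ×ₗ ℕ := toLex (e.symm p.val.1, p.val.2)

lemma posKey_injective : Function.Injective (posKey (w := w) e) := by
  rintro ⟨⟨a, i⟩, hi⟩ ⟨⟨b, j⟩, hj⟩ h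
  have h' := toLex.injective h
  simp only [Prod.mk.injEq, EmbeddingLike.apply_eq_iff_eq] at h'
  obtain ⟨rfl, rfl⟩ := h'
  rfl

lemma posLt_iff {q p : ATil S w} : posLt e q p ↔ posKey e q < posKey e p := by
  simp [posLt, posKey, Prod.Lex.toLex_lt_toLex]

lemma ltTil_of_first {lt : FreeExp S → FreeExp S → Prop} {x y : ATil S w →₀ ℕ}
    (hk : kap S w x = kap S w y) (p : ATil S w) (hp : y p < x p)
    (h : ∀ q, posKey e q < posKey e p → x q = y q) : ltTil w lt e x y :=
  Or.inr ⟨hk, p, hp, fun q hq => h q ((posLt_iff e).1 hq)⟩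

lemma ltTil_admissible {lt : FreeExp S → FreeExp S → Prop} (h : IsAdmissible lt) :
    IsAdmissible (ltTil w lt e) := by
  classical
  obtain ⟨htot, htrans, hirr, hadd, hpos⟩ := h
  refine ⟨fun x y => ?_, ?_, ?_, ?_, ?_⟩
  · rcases htot (kap S w x) (kap S w y) with h | h | h
    · exact Or.inl (Or.inl h)
    · by_cases hxy : x = y
      · exact Or.inr (Or.inl hxy)
      have hne : ((x.support ∪ y.support).filter fun p => x p ≠ y p).Nonempty := by
        obtain ⟨p, hp⟩ := DFunLike.ne_iff.1 hxy
        refine ⟨p, Finset.mem_filter.2 ⟨?_, hp⟩⟩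
        simp only [Finset.mem_union, Finsupp.mem_support_iff]
        omega
      obtain ⟨p, hp, hmin⟩ := Finset.exists_min_image _ (posKey e) hne
      have hp' := (Finset.mem_filter.1 hp).2
      have hlt : ∀ q, posKey e q < posKey e p → x q = y q := by
        intro q hq
        by_contra hq'
        refine absurd (hmin q (Finset.mem_filter.2 ⟨?_, hq'⟩)) (not_le.2 hq)
        simp only [Finset.mem_union, Finsupp.mem_support_iff]
        omega
      rcases Nat.lt_or_gt_of_ne hp' with h1 | h1
      · exact Or.inr (Or.inr (ltTil_of_first e h.symm p h1 fun q hq => (hlt q hq).symm))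
      · exact Or.inl (ltTil_of_first e h p h1 hlt)
    · exact Or.inr (Or.inr (Or.inl h))
  · rintro x y z (h1 | ⟨h1, p, hp, hp'⟩) (h2 | ⟨h2, r, hr, hr'⟩)
    · exact Or.inl (htrans _ _ _ h1 h2)
    · exact Or.inl (h2 ▸ h1)
    · exact Or.inl (h1 ▸ h2)
    · simp only [posLt_iff] at hp' hr'
      rcases lt_trichotomy (posKey e p) (posKey e r) with h | h | h
      · refine ltTil_of_first e (h1.trans h2) p (hr' p h ▸ hp) fun q hq => ?_
        rw [hp' q hq, hr' q (hq.trans h)]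
      · obtain rfl := posKey_injective e h
        refine ltTil_of_first e (h1.trans h2) p (hr.trans hp) fun q hq => ?_
        rw [hp' q hq, hr' q hq]
      · refine ltTil_of_first e (h1.trans h2) r ((hp' r h).symm ▸ hr) fun q hq => ?_
        rw [hp' q (hq.trans h), hr' q hq]
  · rintro x (h | ⟨_, p, hp, _⟩)
    · exact hirr _ h
    · exact lt_irrefl _ hp
  · rintro x y z (h | ⟨h, p, hp, hp'⟩)
    · exact Or.inl (by rw [kap_add, kap_add]; exact hadd _ _ _ h)
    · refine Or.inr ⟨by rw [kap_add, kap_add, h], p, by simpa using hp, fun q hq => ?_⟩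
      simp [hp' q hq]
  · intro x hx
    exact Or.inl (by rw [kap_zero]; exact hpos _ (kap_ne_zero hx))

/-! ### Spreading the levels within a fibre of `κ` -/

/-- Lowering the earlier and raising the later of two factors yields a smaller element. -/
lemma spread_lt (lt : FreeExp S → FreeExp S → Prop) {P Q P' Q' : ATil S w}
    (hP : P'.val.1 = P.val.1) (hQ : Q'.val.1 = Q.val.1) (h1 : posKey e P' < posKey e P)
    (h2 : posKey e P ≤ posKey e Q) (h3 : posKey e Q < posKey e Q') :
    ltTil w lt e (Finsupp.single P' 1 + Finsupp.single Q' 1)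
      (Finsupp.single P 1 + Finsupp.single Q 1) := by
  classical
  have hz : ∀ {q r : ATil S w}, posKey e q < posKey e r →
      (Finsupp.single r 1 : ATil S w →₀ ℕ) q = 0 := fun {q r} h =>
    Finsupp.single_eq_of_ne fun h' => absurd h (h' ▸ lt_irrefl _)
  refine ltTil_of_first e (by simp only [kap_add, kap_single, hP, hQ]) P' ?_ fun q hq => ?_
  · simp [hz h1, hz (h1.trans_le h2)]
  · simp [hz hq, hz (hq.trans h1), hz (hq.trans (h1.trans_le h2)),
      hz (hq.trans ((h1.trans_le h2).trans h3))]

/-- If `z` is not the least element with given `κ` and `δ`, it has two factors that can be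
spread further apart. -/
lemma exists_spread (hw : ∀ s t : S, w (s + t) = w s + w t) {y z : ATil S w →₀ ℕ}
    (hk : kap S w y = kap S w z) (hd : delt w y = delt w z) (p : ATil S w) (hp : z p < y p)
    (hlt : ∀ q, posKey e q < posKey e p → y q = z q) :
    ∃ (P Q : ATil S w) (u : ATil S w →₀ ℕ),
      z = (Finsupp.single P 1 + Finsupp.single Q 1) + u ∧
      0 < P.val.2 ∧ Q.val.2 < w (Q.val.1 : S) ∧ posKey e P ≤ posKey e Q := by
  classical
  -- Cancel the common factors of `y` and `z`.
  obtain ⟨g, y', z', rfl, rfl, hy'p, hz'⟩ : ∃ g y' z' : ATil S w →₀ ℕ,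
      y = g + y' ∧ z = g + z' ∧ y' p ≠ 0 ∧ ∀ q, z' q ≠ 0 → posKey e p < posKey e q := by
    refine ⟨z ⊓ y, y - z, z - y, ?_, ?_, ?_, fun q hq => ?_⟩
    · ext q; simp; omega
    · ext q; simp; omega
    · simp; omega
    · rcases lt_trichotomy (posKey e p) (posKey e q) with h | h | h
      · exact h
      · obtain rfl := posKey_injective e h
        exact absurd hq (by simp; omega)
      · exact absurd hq (by simp [hlt q h])
  rw [kap_add, kap_add] at hk
  rw [delt_add, delt_add] at hd
  replace hk := add_left_cancel hk
  replace hd := add_left_cancel hd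
  obtain ⟨y'', rfl⟩ := exists_eq_single_add hy'p
  rw [kap_add, kap_single] at hk
  rw [delt_add, delt_single, one_mul] at hd
  obtain ⟨P₀, hP₀, hP₀'⟩ := exists_of_kap_ne_zero (z := z') (a := p.val.1) (by rw [← hk]; simp)
  -- The first factor of `z'`; it belongs to the same atom as `p`, at a higher level.
  obtain ⟨P, hP, hmin⟩ := Finset.exists_min_image z'.support (posKey e)
    ⟨P₀, Finsupp.mem_support_iff.2 hP₀'⟩
  replace hP := Finsupp.mem_support_iff.1 hP
  have hpP := (posLt_iff e).2 (hz' P hP)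
  have hPP₀ := (hmin P₀ (Finsupp.mem_support_iff.2 hP₀')).lt_or_eq
  have hatom : P.val.1 = p.val.1 := by
    rcases hPP₀ with h | h
    · have h' := (posLt_iff e).2 h
      rw [posLt, hP₀] at h'
      rw [posLt] at hpP
      apply e.symm.injective
      rcases h' with h' | h' <;> rcases hpP with h'' | h''
      · exact absurd h' (not_lt.2 h''.le)
      · exact h''.1.symm
      · exact h'.1
      · exact h'.1
    · rw [posKey_injective e h, hP₀]
  have hlevel : p.val.2 < P.val.2 := by
    rw [posLt, hatom] at hpP
    exact (hpP.resolve_left (lt_irrefl _)).2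
  obtain ⟨z'', rfl⟩ := exists_eq_single_add hP
  rw [kap_add, kap_single, hatom] at hk
  rw [delt_add, delt_single, one_mul] at hd
  replace hk := add_left_cancel hk
  have hle := delt_le hw y''
  rw [hk] at hle
  obtain ⟨Q, hQ, hQ'⟩ := exists_not_full hw z'' (by omega)
  have hPQ := hmin Q (Finsupp.mem_support_iff.2 (by simp [hQ]))
  obtain ⟨u, rfl⟩ := exists_eq_single_add hQ
  exact ⟨P, Q, g + u, by abel, by omega, hQ', hPQ⟩

end Tilde

/-- Corollary 5.6: if `∼_S` has a quadratic Gröbner system then so does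
`∼_{S̃}`. -/
theorem quadratic_groebner_lift (S : Type) [AddCommMonoid S] [IsReducedAffine S]
    (w : S → ℕ) (hw : ∀ s t : S, w (s + t) = w s + w t)
    (h : ∃ (lt : FreeExp S → FreeExp S → Prop) (Λ : Set (FreeExp S × FreeExp S)),
      IsAdmissible lt ∧ IsGroebnerSystem lt (defCon S) Λ ∧
      ∀ p ∈ Λ, degE p.1 ≤ 2 ∧ degE p.2 ≤ 2) :
    ∃ (lt' : (ATil S w →₀ ℕ) → (ATil S w →₀ ℕ) → Prop)
      (Λ' : Set ((ATil S w →₀ ℕ) × (ATil S w →₀ ℕ))),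
      IsAdmissible lt' ∧ IsGroebnerSystem lt' (defConTil S w) Λ' ∧
      ∀ p ∈ Λ', degE p.1 ≤ 2 ∧ degE p.2 ≤ 2 := by
  obtain ⟨lt, Λ, hadm, ⟨hfin, hΛ, hmin⟩, hquad⟩ := h
  have hA : Finite ↥(Atoms S) := (finite_atoms (IsReducedAffine.fg (S := S))).to_subtype
  have hT : Finite (ATil S w) := finite_atil
  obtain ⟨n, ⟨e'⟩⟩ := Finite.exists_equiv_fin ↥(Atoms S)
  let e := e'.symm
  have hadm' : IsAdmissible (ltTil w lt e) := ltTil_admissible e hadm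
  refine ⟨ltTil w lt e, {p | (degE p.1 ≤ 2 ∧ degE p.2 ≤ 2) ∧
    defConTil S w p.1 p.2 ∧ ltTil w lt e p.2 p.1}, hadm', ⟨?_, fun p hp => hp.2, ?_⟩,
    fun p hp => hp.1⟩
  · exact ((finite_degE_le 2).prod (finite_degE_le 2)).subset fun p hp => hp.1
  intro z hz y hzy
  rcases hadm'.1 z y with h | h | h
  · exact Or.inr h
  · exact Or.inl h
  exfalso
  obtain ⟨hfac, hdelt⟩ : fac (kap S w z) = fac (kap S w y) ∧ delt w z = delt w y := hzy
  have hnd : ∀ p ∈ Λ, ¬ ∃ u, kap S w z = p.1 + u := by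
    rintro p hp ⟨u, hu⟩
    obtain ⟨z₁, z₂, rfl, h1, -⟩ := exists_split _ z u hu
    have hc : fac p.1 = fac p.2 := (hΛ p hp).1
    obtain ⟨y₁, hy1, hy2⟩ := exists_lift hw p.2 (delt w z₁) (by
      rw [← hc, ← h1]; exact delt_le hw z₁)
    refine hz (z₁, y₁) ⟨⟨?_, ?_⟩, ⟨?_, hy2.symm⟩, Or.inl ?_⟩ ⟨z₂, rfl⟩
    · rw [← degE_kap, h1]; exact (hquad p hp).1
    · rw [← degE_kap, hy1]; exact (hquad p hp).2
    · rw [h1, hy1, hc]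
    · rw [h1, hy1]; exact (hΛ p hp).2
  rcases h with h | ⟨hk, p, hp, hp'⟩
  · rcases hmin _ hnd _ hfac with h' | h'
    · rw [h'] at h; exact hadm.2.2.1 _ h
    · exact hadm.2.2.1 _ (hadm.2.1 _ _ _ h h')
  · obtain ⟨P, Q, u, rfl, hP, hQ, hPQ⟩ := exists_spread e hw hk hdelt.symm p hp
      fun q hq => hp' q ((posLt_iff e).2 hq)
    let P' := atil w P.val.1 (P.val.2 - 1) ((Nat.sub_le _ 1).trans P.2)
    let Q' := atil w Q.val.1 (Q.val.2 + 1) hQ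
    refine hz (Finsupp.single P 1 + Finsupp.single Q 1,
      Finsupp.single P' 1 + Finsupp.single Q' 1) ⟨⟨?_, ?_⟩, ⟨?_, ?_⟩, ?_⟩ ⟨u, rfl⟩
    · simp only [degE_add, degE_single]; exact le_rfl
    · simp only [degE_add, degE_single]; exact le_rfl
    · simp only [kap_add, kap_single]; rfl
    · simp only [delt_add, delt_single]
      change 1 * P.val.2 + 1 * Q.val.2 = 1 * (P.val.2 - 1) + 1 * (Q.val.2 + 1)
      omega
    · refine spread_lt e lt rfl rfl ((posLt_iff e).1 (Or.inr ⟨rfl, ?_⟩)) hPQ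
        ((posLt_iff e).1 (Or.inr ⟨rfl, ?_⟩))
      · exact Nat.sub_lt hP one_pos
      · exact Nat.lt_succ_self _
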